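/- For every integer n ≥ 0, the K-vector space Ext^n_A(S₂, S₂) has dimension 1 if n ≡ 0 or 3 (mod 4), and dimension 0 if n ≡ 1 or 2 (mod 4). -/

import Mathlib

/-!
Formalization of a statement from "On the Hochschild cohomology of tame Hecke algebras"
by K. Erdmann and S. Schroll.

`HA K` is the special biserial algebra `A = KQ/I` (the basic algebra of the Hecke algebra
`H_q(S_4)` at `q = -1`), presented by generators `e₁, e₂, ε, α, β` and the relations listed in
`HRel`.
-/

set_option synthInstance.maxHeartbeats 1000000
set_option maxHeartbeats 1000000

open scoped TensorProduct

/-- The generators `e₁, e₂, ε, α, β` of the algebra `A`. -/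
inductive HGen | e1 | e2 | eps | al | be

variable (K : Type) [Field K]

open FreeAlgebra in
/-- The defining relations of `A`:  `e₁² = e₁`, `e₂² = e₂`, `e₁e₂ = e₂e₁ = 0`, `e₁ + e₂ = 1`,
`e₁ε = εe₁ = ε`, `e₁α = α = αe₂`, `e₂β = β = βe₁`, `εα = 0`, `βε = 0`, `(αβ)² = ε²`. -/
inductive HRel : FreeAlgebra K HGen → FreeAlgebra K HGen → Prop
  | e1e1 : HRel (ι K HGen.e1 * ι K HGen.e1) (ι K HGen.e1)
  | e2e2 : HRel (ι K HGen.e2 * ι K HGen.e2) (ι K HGen.e2)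
  | e1e2 : HRel (ι K HGen.e1 * ι K HGen.e2) 0
  | e2e1 : HRel (ι K HGen.e2 * ι K HGen.e1) 0
  | sum  : HRel (ι K HGen.e1 + ι K HGen.e2) 1
  | e1eps : HRel (ι K HGen.e1 * ι K HGen.eps) (ι K HGen.eps)
  | epse1 : HRel (ι K HGen.eps * ι K HGen.e1) (ι K HGen.eps)
  | e1al : HRel (ι K HGen.e1 * ι K HGen.al) (ι K HGen.al)
  | ale2 : HRel (ι K HGen.al * ι K HGen.e2) (ι K HGen.al)
  | e2be : HRel (ι K HGen.e2 * ι K HGen.be) (ι K HGen.be)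
  | bee1 : HRel (ι K HGen.be * ι K HGen.e1) (ι K HGen.be)
  | epsal : HRel (ι K HGen.eps * ι K HGen.al) 0
  | beeps : HRel (ι K HGen.be * ι K HGen.eps) 0
  | abab : HRel (ι K HGen.al * ι K HGen.be * (ι K HGen.al * ι K HGen.be))
      (ι K HGen.eps * ι K HGen.eps)

/-- The algebra `A`. -/
abbrev HA := RingQuot (HRel K)

/-- The image of `e₁` in `A`. -/
def gE1 : HA K := RingQuot.mkAlgHom K (HRel K) (FreeAlgebra.ι K HGen.e1)
/-- The image of `e₂` in `A`. -/
def gE2 : HA K := RingQuot.mkAlgHom K (HRel K) (FreeAlgebra.ι K HGen.e2)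
/-- The image of `ε` in `A`. -/
def gEps : HA K := RingQuot.mkAlgHom K (HRel K) (FreeAlgebra.ι K HGen.eps)
/-- The image of `α` in `A`. -/
def gAl : HA K := RingQuot.mkAlgHom K (HRel K) (FreeAlgebra.ι K HGen.al)
/-- The image of `β` in `A`. -/
def gBe : HA K := RingQuot.mkAlgHom K (HRel K) (FreeAlgebra.ι K HGen.be)

/-- The algebra map `A →ₐ[K] K` defining the one-dimensional representation at vertex 1
(`e₁` acts by `1`; `e₂, ε, α, β` act by `0`). -/
def phi1 : HA K →ₐ[K] K :=
  RingQuot.liftAlgHom K ⟨FreeAlgebra.lift K (fun g => match g with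
    | HGen.e1 => (1 : K) | _ => 0), by
      rintro x y h
      induction h <;> simp⟩

/-- The algebra map `A →ₐ[K] K` defining the one-dimensional representation at vertex 2. -/
def phi2 : HA K →ₐ[K] K :=
  RingQuot.liftAlgHom K ⟨FreeAlgebra.lift K (fun g => match g with
    | HGen.e2 => (1 : K) | _ => 0), by
      rintro x y h
      induction h <;> simp⟩

/-- The simple right `A`-module `S_{i+1}` (one-dimensional, `e_{i+1}` acts as the identity,
the other generators act by zero); `SMod K 0 = S₁` and `SMod K 1 = S₂`.
Right `A`-modules are modules over `Aᵐᵒᵖ`. -/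
def SMod (_i : Fin 2) : Type := K

instance (i : Fin 2) : AddCommGroup (SMod K i) := inferInstanceAs (AddCommGroup K)

instance (i : Fin 2) : Module (HA K)ᵐᵒᵖ (SMod K i) :=
  Module.compHom K
    (((if i = 0 then phi1 K else phi2 K) : HA K →ₐ[K] K).toRingHom.fromOpposite
      (fun _ _ => mul_comm _ _))

open CategoryTheory in
/-- `dim_K Ext^n_A(S_{i+1}, S_{j+1})`, computed in the category of right `A`-modules,
which is a `K`-linear abelian category with enough projectives. -/
noncomputable def extDim (i j : Fin 2) (n : ℕ) : ℕ :=
  Module.finrank K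
    (((Ext K (ModuleCat (HA K)ᵐᵒᵖ) n).obj
      (Opposite.op (ModuleCat.of (HA K)ᵐᵒᵖ (SMod K i)))).obj
      (ModuleCat.of (HA K)ᵐᵒᵖ (SMod K j)))

/-!
The eleven words `e₁, ε, α, αβ, αβα, ε², e₂, β, βα, βαβ, βαβα` form a basis of `A` which is closed
under multiplication up to zero. Therefore exactness of a sequence of left multiplications by words
is a finite check on the multiplication table, and

`⋯ ⟶ e₂A ⟶ e₂A ⟶ e₁A ⟶ e₁A ⟶ e₂A ⟶ S₂ ⟶ 0`,

with differentials the left multiplications by `β`, `ε`, `α`, `βαβα` (from the right end), is a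
projective resolution of `S₂`, periodic because the kernel `βA` of the augmentation is also the
kernel of the left multiplication by `βαβα` on `e₂A`. Every differential multiplies by an element
which annihilates the simple modules, so `Ext^n(S₂, S_j) = Hom(e_i A, S_j) = S_j e_i`, where `e_i A`
is the `n`-th term of the resolution.
-/

universe u v w

section ProjectiveResolution

open CategoryTheory

variable {C : Type u} [Category.{v} C] [Abelian C]

/-- The projective resolution `⋯ ⟶ X 2 ⟶ X 1 ⟶ X 0 ⟶ Z` assembled from an exact sequence of
projective objects. -/
noncomputable def projectiveResolutionOfExact {Z : C} (X : ℕ → C) [∀ n, Projective (X n)]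
    (d : ∀ n, X (n + 1) ⟶ X n) (π : X 0 ⟶ Z) [Epi π]
    (d_comp_d : ∀ n, d (n + 1) ≫ d n = 0) (d_comp_π : d 0 ≫ π = 0)
    (exact_d : ∀ n, (ShortComplex.mk _ _ (d_comp_d n)).Exact)
    (exact_π : (ShortComplex.mk _ _ d_comp_π).Exact) : ProjectiveResolution Z where
  complex := ChainComplex.of X d d_comp_d
  projective n := inferInstanceAs (Projective (X n))
  π := (ChainComplex.toSingle₀Equiv _ _).symm
    ⟨π, (congrArg (· ≫ π) (ChainComplex.of_d X d 0)).trans d_comp_π⟩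
  quasiIso := ⟨fun n => by
    have hd (i : ℕ) : 𝟙 (X (i + 1)) ≫ d i = (ChainComplex.of X d d_comp_d).d (i + 1) i ≫ 𝟙 (X i) :=
      (Category.id_comp _).trans ((ChainComplex.of_d X d i).symm.trans (Category.comp_id _).symm)
    have hπ (h : (ChainComplex.of X d d_comp_d).d 1 0 ≫ π = 0) : 𝟙 (X 0) ≫ π =
        ((ChainComplex.toSingle₀Equiv (ChainComplex.of X d d_comp_d) Z).symm ⟨π, h⟩).f 0 ≫ 𝟙 Z := by
      rw [ChainComplex.toSingle₀Equiv_symm_apply_f_zero]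
      exact (Category.id_comp π).trans (Category.comp_id π).symm
    cases n with
    | zero =>
      rw [ChainComplex.quasiIsoAt₀_iff, ShortComplex.quasiIso_iff_of_zeros' _ rfl rfl rfl]
      refine (ShortComplex.exact_and_epi_g_iff_of_iso ?_).2 ⟨exact_π, ‹Epi π›⟩
      exact ShortComplex.isoMk (Iso.refl _) (Iso.refl _) (Iso.refl _) (hd 0) (hπ _)
    | succ n =>
      rw [quasiIsoAt_iff_exactAt' (hL := ChainComplex.exactAt_succ_single_obj ..),
        HomologicalComplex.exactAt_iff' _ (n + 2) (n + 1) n (by simp) (by simp)]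
      refine (ShortComplex.exact_iff_of_iso ?_).2 (exact_d n)
      exact ShortComplex.isoMk (Iso.refl _) (Iso.refl _) (Iso.refl _) (hd (n + 1)) (hd n)⟩

theorem nonempty_ext_linearEquiv_hom (k : Type w) [Ring k] [Linear k C] [EnoughProjectives C]
    {Z Y : C} (P : ProjectiveResolution Z)
    (h : ∀ n (φ : P.complex.X n ⟶ Y), P.complex.d (n + 1) n ≫ φ = 0) (n : ℕ) :
    Nonempty ((((Ext k C n).obj (Opposite.op Z)).obj Y) ≃ₗ[k] (P.complex.X n ⟶ Y)) := by
  have hd (i j : ℕ) : (P.complex.linearYonedaObj k Y).d i j = 0 := by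
    by_cases hij : i + 1 = j
    · subst hij
      ext φ
      exact h i φ
    · exact HomologicalComplex.shape _ _ _ hij
  exact ⟨(P.isoExt n Y ≪≫ (ShortComplex.HomologyData.ofZeros
    ((P.complex.linearYonedaObj k Y).sc n) (hd _ _) (hd _ _)).left.homologyIso).toLinearEquiv⟩

end ProjectiveResolution

section RightIdeal

open CategoryTheory MulOpposite

variable {R : Type u} [Ring R]

/-- For an idempotent `e` of a ring `R`, the right ideal `eR`, i.e. the right `R`-module of all
`x` with `e * x = x`. Right `R`-modules are modules over `Rᵐᵒᵖ`. -/
def rightIdeal (e : R) : Submodule Rᵐᵒᵖ R where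
  carrier := {x | e * x = x}
  add_mem' hx hy := (mul_add e _ _).trans (congrArg₂ (· + ·) hx hy)
  zero_mem' := mul_zero e
  smul_mem' r x hx := (mul_smul_comm r e x).trans (congrArg (r • ·) hx)

theorem mem_rightIdeal {e x : R} : x ∈ rightIdeal e ↔ e * x = x := Iff.rfl

namespace rightIdeal

variable {e f b : R}

/-- The left multiplication map `b · : eR → fR`, defined whenever `fb = b`. -/
def mulLeft (h : f * b = b) : rightIdeal e →ₗ[Rᵐᵒᵖ] rightIdeal f :=
  ((DistribSMul.toLinearMap Rᵐᵒᵖ R b).comp (rightIdeal e).subtype).codRestrict (rightIdeal f)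
    fun x => (mul_assoc f b x).symm.trans (congrArg (· * (x : R)) h)

@[simp] theorem coe_mulLeft (h : f * b = b) (x : rightIdeal e) : (mulLeft h x : R) = b * x := rfl

variable {M : Type w} [AddCommGroup M] [Module Rᵐᵒᵖ M]

/-- The map `eR → M`, `x ↦ m x` into a right `R`-module `M`. -/
def lift (e : R) (m : M) : rightIdeal e →ₗ[Rᵐᵒᵖ] M where
  toFun x := op (x : R) • m
  map_add' x y := add_smul (op (x : R)) (op (y : R)) m
  map_smul' r x := by simp [← mul_smul]

@[simp] theorem lift_apply (m : M) (x : rightIdeal e) : lift e m x = op (x : R) • m := rfl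

theorem hom_apply (he : e * e = e) (φ : rightIdeal e →ₗ[Rᵐᵒᵖ] M) (x : rightIdeal e) :
    φ x = op (x : R) • φ ⟨e, he⟩ := by
  rw [← map_smul]
  exact congrArg φ (Subtype.ext x.2.symm)

theorem projective (he : IsIdempotentElem e) :
    Projective (ModuleCat.of Rᵐᵒᵖ (rightIdeal e)) := by
  have : Module.Projective Rᵐᵒᵖ (rightIdeal e) :=
    .of_split (lift e (1 : Rᵐᵒᵖ)) (LinearMap.toSpanSingleton Rᵐᵒᵖ _ ⟨e, he⟩) <| by
      ext x
      simpa using mem_rightIdeal.1 x.2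
  exact (IsProjective.iff_projective ..).1 this

open scoped ModuleCat in
/-- Evaluation at `e` identifies `Hom(eR, N)` with `Ne`. -/
theorem finrank_hom (k : Type v) [Field k] [Algebra k R] (he : e * e = e)
    (N : ModuleCat.{u} Rᵐᵒᵖ) :
    Module.finrank k (ModuleCat.of Rᵐᵒᵖ (rightIdeal e) ⟶ N) =
      Module.finrank k (LinearMap.range (Algebra.lsmul k k N (op e))) := by
  let ev : (ModuleCat.of Rᵐᵒᵖ (rightIdeal e) ⟶ N) →ₗ[k] N :=
    { toFun φ := φ.hom ⟨e, he⟩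
      map_add' _ _ := rfl
      map_smul' _ _ := rfl }
  have ev_injective : Function.Injective ev := fun φ ψ hφψ => by
    refine ModuleCat.hom_ext (LinearMap.ext fun x => ?_)
    rw [hom_apply he φ.hom, hom_apply he ψ.hom]
    exact congrArg (op (x : R) • ·) hφψ
  have range_ev : LinearMap.range ev = LinearMap.range (Algebra.lsmul k k N (op e)) := by
    ext y
    constructor
    · rintro ⟨φ, rfl⟩
      exact ⟨φ.hom ⟨e, he⟩, (hom_apply he φ.hom ⟨e, he⟩).symm⟩
    · rintro ⟨y, rfl⟩
      exact ⟨ModuleCat.ofHom (lift e y), rfl⟩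
  rw [← range_ev, LinearMap.finrank_range_of_inj ev_injective]

end rightIdeal

/-- The sequence of right `R`-modules `⋯ → e₂R → e₁R → e₀R → M → 0`, whose maps are left
multiplication by `bₙ : eₙ₊₁R → eₙR` and the augmentation `x ↦ m x`, is well defined and exact,
and the `eₙ` are idempotent. -/
structure IsRightIdealResolution {M : Type w} [AddCommGroup M] [Module Rᵐᵒᵖ M] (e b : ℕ → R)
    (m : M) : Prop where
  idem (n : ℕ) : e n * e n = e n
  idem_mul (n : ℕ) : e n * b n = b n
  mul_idem (n : ℕ) : b n * e (n + 1) = b n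
  mul_succ (n : ℕ) : b n * b (n + 1) = 0
  exact (n : ℕ) (x : R) : e (n + 1) * x = x → b n * x = 0 → ∃ y, b (n + 1) * y = x
  smul_idem : op (e 0) • m = m
  smul_eq_zero : op (b 0) • m = 0
  exact_zero (x : R) : e 0 * x = x → op x • m = 0 → ∃ y, b 0 * y = x
  exists_smul_eq (m' : M) : ∃ x : R, op x • m = m'

namespace IsRightIdealResolution

variable {M : Type u} [AddCommGroup M] [Module Rᵐᵒᵖ M] {e b : ℕ → R} {m : M}

/-- The map `bₙ · : eₙ₊₁R → eₙR` as a morphism of right `R`-modules. -/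
def d (h : IsRightIdealResolution e b m) (n : ℕ) :
    ModuleCat.of Rᵐᵒᵖ (rightIdeal (e (n + 1))) ⟶ ModuleCat.of Rᵐᵒᵖ (rightIdeal (e n)) :=
  ModuleCat.ofHom (rightIdeal.mulLeft (h.idem_mul n))

theorem exists_mulLeft_eq (h : IsRightIdealResolution e b m) (n : ℕ) {x : rightIdeal (e n)}
    (hx : ∃ y, b n * y = x) :
    ∃ y : rightIdeal (e (n + 1)), rightIdeal.mulLeft (h.idem_mul n) y = x := by
  obtain ⟨y, hy⟩ := hx
  refine ⟨⟨e (n + 1) * y, ?_⟩, Subtype.ext ?_⟩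
  · rw [mem_rightIdeal, ← mul_assoc, h.idem]
  · rw [rightIdeal.coe_mulLeft, ← mul_assoc, h.mul_idem, hy]

theorem d_comp_d (h : IsRightIdealResolution e b m) (n : ℕ) : h.d (n + 1) ≫ h.d n = 0 := by
  ext x
  change b n * (b (n + 1) * x.1) = 0
  rw [← mul_assoc, h.mul_succ, zero_mul]

theorem d_comp_lift (h : IsRightIdealResolution e b m) :
    h.d 0 ≫ ModuleCat.ofHom (rightIdeal.lift (e 0) m) = 0 := by
  ext x
  change op (b 0 * x.1) • m = 0
  rw [op_mul, mul_smul, h.smul_eq_zero, smul_zero]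

theorem epi_lift (h : IsRightIdealResolution e b m) :
    Epi (ModuleCat.ofHom (rightIdeal.lift (e 0) m)) := by
  rw [ModuleCat.epi_iff_surjective]
  intro m'
  obtain ⟨x, rfl⟩ := h.exists_smul_eq m'
  refine ⟨⟨e 0 * x, ?_⟩, ?_⟩
  · rw [mem_rightIdeal, ← mul_assoc, h.idem]
  · change op (e 0 * x) • m = op x • m
    rw [op_mul, mul_smul, h.smul_idem]

theorem exact_d (h : IsRightIdealResolution e b m) (n : ℕ) :
    (ShortComplex.mk _ _ (h.d_comp_d n)).Exact := by
  rw [ShortComplex.moduleCat_exact_iff]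
  exact fun x hx => h.exists_mulLeft_eq (n + 1) (h.exact n x.1 x.2 (congrArg Subtype.val hx))

theorem exact_lift (h : IsRightIdealResolution e b m) :
    (ShortComplex.mk _ _ h.d_comp_lift).Exact := by
  rw [ShortComplex.moduleCat_exact_iff]
  exact fun x hx => h.exists_mulLeft_eq 0 (h.exact_zero x.1 x.2 hx)

/-- The projective resolution of `M` described by `IsRightIdealResolution e b m`. -/
noncomputable def projectiveResolution (h : IsRightIdealResolution e b m) :
    ProjectiveResolution (ModuleCat.of Rᵐᵒᵖ M) :=
  have (n : ℕ) := rightIdeal.projective (h.idem n)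
  have := h.epi_lift
  projectiveResolutionOfExact (fun n => ModuleCat.of Rᵐᵒᵖ (rightIdeal (e n))) h.d
    (ModuleCat.ofHom (rightIdeal.lift (e 0) m)) h.d_comp_d h.d_comp_lift h.exact_d h.exact_lift

theorem projectiveResolution_d (h : IsRightIdealResolution e b m) (n : ℕ) :
    h.projectiveResolution.complex.d (n + 1) n = h.d n :=
  ChainComplex.of_d (fun n => ModuleCat.of Rᵐᵒᵖ (rightIdeal (e n))) h.d n

theorem d_comp_eq_zero (h : IsRightIdealResolution e b m) {N : ModuleCat.{u} Rᵐᵒᵖ} (n : ℕ)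
    (hN : ∀ y : N, op (b n) • y = 0) (φ : ModuleCat.of Rᵐᵒᵖ (rightIdeal (e n)) ⟶ N) :
    h.d n ≫ φ = 0 := by
  ext x
  change φ.hom (rightIdeal.mulLeft (h.idem_mul n) x) = 0
  rw [rightIdeal.hom_apply (h.idem n) φ.hom, rightIdeal.coe_mulLeft, op_mul, mul_smul, hN,
    smul_zero]

open scoped ModuleCat in
theorem finrank_ext (k : Type v) [Field k] [Algebra k R] (h : IsRightIdealResolution e b m)
    (N : ModuleCat.{u} Rᵐᵒᵖ) (hN : ∀ n (y : N), op (b n) • y = 0) (n : ℕ) :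
    Module.finrank k
        (((Ext k (ModuleCat Rᵐᵒᵖ) n).obj (Opposite.op (ModuleCat.of Rᵐᵒᵖ M))).obj N) =
      Module.finrank k (LinearMap.range (Algebra.lsmul k k N (op (e n)))) := by
  obtain ⟨φ⟩ := nonempty_ext_linearEquiv_hom (Y := N) k h.projectiveResolution
    (fun n φ => (congrArg (· ≫ φ) (h.projectiveResolution_d n)).trans
      (h.d_comp_eq_zero n (hN n) φ)) n
  exact φ.finrank_eq.trans (rightIdeal.finrank_hom k (h.idem n) N)

end IsRightIdealResolution

end RightIdeal

section MonomialBasis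

variable {ι : Type u} {k : Type v} {A : Type w} [CommRing k] [Ring A] [Algebra k A]

/-- The basis `B` is closed under multiplication up to zero: `B i * B j` is the basis element
indexed by `mul i j`, or zero if `mul i j = none`. -/
def IsMultiplicativeBasis (B : Module.Basis ι k A) (mul : ι → ι → Option ι) : Prop :=
  ∀ i j, B i * B j = (mul i j).elim 0 B

namespace IsMultiplicativeBasis

variable {B : Module.Basis ι k A} {mul : ι → ι → Option ι}

theorem repr_eq_zero (hB : IsMultiplicativeBasis B mul) {b i j : ι}
    (hb : ∀ i', mul b i' = some j → i' = i) (hi : mul b i = some j) {x : A} (hx : B b * x = 0) :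
    B.repr x i = 0 := by
  classical
  have key : B.coord j ∘ₗ LinearMap.mulLeft k (B b) = B.coord i := by
    refine B.ext fun i' => ?_
    suffices B.repr ((mul b i').elim 0 B) j = B.repr (B i') i by simpa [hB b i'] using this
    by_cases hi' : i' = i
    · simp [hi', hi]
    · cases h : mul b i' with
      | none => simp [hi']
      | some j' =>
        have hj' : j' ≠ j := fun hj' => hi' (hb i' (h.trans (congrArg some hj')))
        simp [hi', hj']
  simpa [hx] using (LinearMap.congr_fun key x).symm

/-- Exactness of `A ⟶ eA ⟶ A`, with maps left multiplication by `c` and by `b`, can be read off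
from the multiplication of the indices. -/
theorem exists_mul_eq (hB : IsMultiplicativeBasis B mul) {e b c : ι}
    (hb : ∀ i i' j, mul b i = some j → mul b i' = some j → i = i')
    (hbc : ∀ i j, mul e i = some j → mul b i = none → ∃ l, mul c l = some j)
    {x : A} (hex : B e * x = x) (hbx : B b * x = 0) : ∃ y, B c * y = x := by
  suffices x ∈ LinearMap.range (LinearMap.mulLeft k (B c)) from this
  rw [← hex, ← B.linearCombination_repr x, Finsupp.linearCombination_apply, Finsupp.sum,
    Finset.mul_sum]
  refine Submodule.sum_mem _ fun i _ => ?_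
  rw [mul_smul_comm, hB]
  cases hei : mul e i with
  | none => simp
  | some j =>
    cases hbi : mul b i with
    | some l =>
      rw [hB.repr_eq_zero (fun i' hi' => hb i' i l hi' hbi) hbi hbx, zero_smul]
      exact Submodule.zero_mem _
    | none =>
      obtain ⟨l, hl⟩ := hbc i j hei hbi
      exact Submodule.smul_mem _ _ ⟨B l, by simp [hB c l, hl]⟩

end IsMultiplicativeBasis

end MonomialBasis

section TransitionMatrix

variable {ι : Type u} [DecidableEq ι] (k : Type v) [CommRing k]

/-- The matrix of a partial map `t` of the index set, acting on row vectors: its `i`-th row is the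
unit vector at `t i`, or zero if `t i = none`. -/
def transitionMatrix (t : ι → Option ι) : Matrix ι ι k :=
  .of fun i => (t i).elim 0 (Pi.single · 1)

theorem transitionMatrix_mul [Fintype ι] (s t : ι → Option ι) :
    transitionMatrix k s * transitionMatrix k t = transitionMatrix k fun i => (s i).bind t := by
  ext i j
  cases h : s i <;> simp [transitionMatrix, Matrix.mul_apply, h, Pi.single_apply]

theorem transitionMatrix_none : transitionMatrix k (fun _ : ι => none) = 0 := rfl

theorem transitionMatrix_some : transitionMatrix k (some : ι → Option ι) = 1 := by
  ext i j
  simp [transitionMatrix, Matrix.one_apply, Pi.single_apply, eq_comm]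

theorem transitionMatrix_add_eq_one {s t : ι → Option ι}
    (h : ∀ i, s i = some i ∧ t i = none ∨ s i = none ∧ t i = some i) :
    transitionMatrix k s + transitionMatrix k t = 1 := by
  ext i j
  rcases h i with ⟨hs, ht⟩ | ⟨hs, ht⟩ <;>
    simp [transitionMatrix, Matrix.one_apply, Pi.single_apply, hs, ht, eq_comm]

theorem transitionMatrix_foldlM [Fintype ι] {G : Type w} (step : ι → G → Option ι) (l : List G) :
    transitionMatrix k (fun i => l.foldlM step i) =
      (l.map fun g => transitionMatrix k (step · g)).prod := by
  induction l with
  | nil => exact transitionMatrix_some k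
  | cons g l ih =>
    rw [List.map_cons, List.prod_cons, ← ih, transitionMatrix_mul]
    rfl

end TransitionMatrix

theorem mul_mem_of_adjoin_eq_top {k : Type u} {A : Type v} [CommRing k] [Ring A] [Algebra k A]
    {s : Set A} (hs : Algebra.adjoin k s = ⊤) {V : Submodule k A}
    (hV : ∀ v ∈ V, ∀ g ∈ s, v * g ∈ V) {v : A} (hv : v ∈ V) (x : A) : v * x ∈ V := by
  have hx : x ∈ Algebra.adjoin k s := hs ▸ Algebra.mem_top
  induction hx using Algebra.adjoin_induction generalizing v with
  | mem g hg => exact hV v hv g hg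
  | algebraMap r =>
    rw [← Algebra.commutes, ← Algebra.smul_def]
    exact V.smul_mem r hv
  | add x y _ _ hx hy =>
    rw [mul_add]
    exact V.add_mem (hx hv) (hy hv)
  | mul x y _ _ hx hy =>
    rw [← mul_assoc]
    exact hy (hx hv)

instance : DecidableEq HGen := fun g h => by
  cases g <;> cases h <;> first | exact isTrue rfl | exact isFalse nofun

/-- The vertex at which a generator, viewed as a path in the quiver of `A`, starts. The vertices
`1` and `2` are encoded as `0` and `1`. -/
def HGen.source : HGen → Fin 2
  | e1 | eps | al => 0
  | e2 | be => 1

/-- The vertex at which a generator, viewed as a path in the quiver of `A`, ends. -/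
def HGen.target : HGen → Fin 2
  | e1 | eps | be => 0
  | e2 | al => 1

/-- The generator `e₁` or `e₂` belonging to a vertex. -/
def HGen.idem : Fin 2 → HGen := ![e1, e2]

/-- The words in the generators that form a basis of `A`: `e₁`, `ε`, `α`, `αβ`, `αβα`, `ε²` and
`e₂`, `β`, `βα`, `βαβ`, `βαβα`. -/
inductive HWord | e1 | eps | al | alBe | alBeAl | epsEps | e2 | be | beAl | beAlBe | beAlBeAl
deriving DecidableEq

namespace HWord

instance : Fintype HWord where
  elems := {e1, eps, al, alBe, alBeAl, epsEps, e2, be, beAl, beAlBe, beAlBeAl}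
  complete w := by cases w <;> decide

/-- The spelling of a word in the generators. -/
def letters : HWord → List HGen
  | e1 => [.e1]
  | eps => [.eps]
  | al => [.al]
  | alBe => [.al, .be]
  | alBeAl => [.al, .be, .al]
  | epsEps => [.eps, .eps]
  | e2 => [.e2]
  | be => [.be]
  | beAl => [.be, .al]
  | beAlBe => [.be, .al, .be]
  | beAlBeAl => [.be, .al, .be, .al]

/-- Right multiplication of a word by a generator in `A`, where `none` stands for the product being
zero. -/
def mulGen : HWord → HGen → Option HWord
  | e1, .e1 => some e1
  | e1, .eps => some eps
  | e1, .al => some al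
  | eps, .e1 => some eps
  | eps, .eps => some epsEps
  | al, .e2 => some al
  | al, .be => some alBe
  | alBe, .e1 => some alBe
  | alBe, .al => some alBeAl
  | alBeAl, .e2 => some alBeAl
  | alBeAl, .be => some epsEps
  | epsEps, .e1 => some epsEps
  | e2, .e2 => some e2
  | e2, .be => some be
  | be, .e1 => some be
  | be, .al => some beAl
  | beAl, .e2 => some beAl
  | beAl, .be => some beAlBe
  | beAlBe, .e1 => some beAlBe
  | beAlBe, .al => some beAlBeAl
  | beAlBeAl, .e2 => some beAlBeAl
  | _, _ => none

/-- The product of two words in `A`, where `none` stands for the product being zero. -/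
def mul (w v : HWord) : Option HWord := v.letters.foldlM mulGen w

/-- The word `e₁` or `e₂` belonging to a vertex. -/
def idem : Fin 2 → HWord := ![e1, e2]

theorem idem_mul_idem : ∀ i : Fin 2, mul (idem i) (idem i) = some (idem i) := by
  decide

theorem mul_left_cancel : ∀ {w v v' u : HWord}, w.mul v = some u → w.mul v' = some u → v = v' := by
  decide +kernel

end HWord

namespace HA

open MulOpposite

/-- The image of a generator in `A`. -/
def gen (g : HGen) : HA K := RingQuot.mkAlgHom K (HRel K) (FreeAlgebra.ι K g)

variable {K}

theorem gen_mul_gen_of_rel {g h : HGen} {x : FreeAlgebra K HGen}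
    (r : HRel K (FreeAlgebra.ι K g * FreeAlgebra.ι K h) x) :
    gen K g * gen K h = RingQuot.mkAlgHom K (HRel K) x :=
  (map_mul _ _ _).symm.trans (RingQuot.mkAlgHom_rel K r)

theorem gen_idem_source_mul : ∀ g : HGen, gen K (.idem g.source) * gen K g = gen K g
  | .e1 => gen_mul_gen_of_rel .e1e1
  | .e2 => gen_mul_gen_of_rel .e2e2
  | .eps => gen_mul_gen_of_rel .e1eps
  | .al => gen_mul_gen_of_rel .e1al
  | .be => gen_mul_gen_of_rel .e2be

theorem gen_mul_idem_target : ∀ g : HGen, gen K g * gen K (.idem g.target) = gen K g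
  | .e1 => gen_mul_gen_of_rel .e1e1
  | .e2 => gen_mul_gen_of_rel .e2e2
  | .eps => gen_mul_gen_of_rel .epse1
  | .al => gen_mul_gen_of_rel .ale2
  | .be => gen_mul_gen_of_rel .bee1

theorem gen_idem_mul_gen_idem {i j : Fin 2} (hij : i ≠ j) :
    gen K (.idem i) * gen K (.idem j) = 0 := by
  fin_cases i <;> fin_cases j
  · exact absurd rfl hij
  · exact (gen_mul_gen_of_rel .e1e2).trans (map_zero _)
  · exact (gen_mul_gen_of_rel .e2e1).trans (map_zero _)
  · exact absurd rfl hij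

theorem gen_mul_gen_of_ne {g h : HGen} (hgh : g.target ≠ h.source) : gen K g * gen K h = 0 := by
  rw [← gen_mul_idem_target g, ← gen_idem_source_mul h, mul_assoc, ← mul_assoc (gen K (.idem _)),
    gen_idem_mul_gen_idem hgh, zero_mul, mul_zero]

theorem eps_mul_al : gen K .eps * gen K .al = 0 :=
  (gen_mul_gen_of_rel .epsal).trans (map_zero _)

theorem be_mul_eps : gen K .be * gen K .eps = 0 :=
  (gen_mul_gen_of_rel .beeps).trans (map_zero _)

theorem al_be_al_be :
    gen K .al * (gen K .be * (gen K .al * gen K .be)) = gen K .eps * gen K .eps := by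
  simpa [gen, mul_assoc] using RingQuot.mkAlgHom_rel K (HRel.abab (K := K))

theorem eps_mul_eps_mul_eps : gen K .eps * (gen K .eps * gen K .eps) = 0 := by
  rw [← al_be_al_be, ← mul_assoc, eps_mul_al, zero_mul]

theorem be_mul_eps_mul_eps : gen K .be * (gen K .eps * gen K .eps) = 0 := by
  rw [← mul_assoc, be_mul_eps, zero_mul]

theorem gen_e1_add_gen_e2 : gen K .e1 + gen K .e2 = 1 := by
  simpa [gen] using RingQuot.mkAlgHom_rel K (HRel.sum (K := K))

theorem adjoin_range_gen : Algebra.adjoin K (Set.range (gen K)) = ⊤ := by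
  have h : Set.range (gen K) = RingQuot.mkAlgHom K (HRel K) '' Set.range (FreeAlgebra.ι K) :=
    (Set.range_comp ..)
  rw [h, ← AlgHom.map_adjoin, FreeAlgebra.adjoin_range_ι, Algebra.map_top,
    AlgHom.range_eq_top]
  exact RingQuot.mkAlgHom_surjective K (HRel K)

variable (K) in
/-- The element of `A` spelled by a word. -/
def eval (w : HWord) : HA K := (w.letters.map (gen K)).prod

theorem eval_mul_gen (w : HWord) (g : HGen) :
    eval K w * gen K g = (w.mulGen g).elim 0 (eval K) := by
  have idem_mul {g h : HGen} (hg : g = .idem h.source) : gen K g * gen K h = gen K h :=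
    hg ▸ gen_idem_source_mul h
  have mul_idem {g h : HGen} (hh : h = .idem g.target) : gen K g * gen K h = gen K g :=
    hh ▸ gen_mul_idem_target g
  cases w <;> cases g <;>
    simp (disch := decide) only [eval, HWord.letters, HWord.mulGen, mul_assoc,
      List.map_cons, List.map_nil, List.prod_cons, List.prod_nil, mul_one, Option.elim, mul_zero,
      idem_mul, mul_idem, gen_mul_gen_of_ne, eps_mul_al, be_mul_eps, al_be_al_be,
      eps_mul_eps_mul_eps, be_mul_eps_mul_eps]

theorem eval_mul_eval (w v : HWord) : eval K w * eval K v = (w.mul v).elim 0 (eval K) := by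
  suffices ∀ l : List HGen, eval K w * (l.map (gen K)).prod =
      (l.foldlM HWord.mulGen w).elim 0 (eval K) from this v.letters
  intro l
  induction l generalizing w with
  | nil => simp
  | cons g l ih =>
    rw [List.map_cons, List.prod_cons, ← mul_assoc, eval_mul_gen, List.foldlM_cons]
    cases w.mulGen g with
    | none => exact zero_mul _
    | some u => exact ih u

variable (K) in
/-- The right regular representation of `A` in terms of words, acting on row vectors. -/
noncomputable def wordRep : HA K →ₐ[K] Matrix HWord HWord K :=
  RingQuot.liftAlgHom K ⟨FreeAlgebra.lift K fun g => transitionMatrix K (HWord.mulGen · g), by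
    intro x y h
    induction h with
    | sum =>
      simp only [map_add, map_one, FreeAlgebra.lift_ι_apply]
      exact transitionMatrix_add_eq_one K (by decide)
    | e1e2 | e2e1 | epsal | beeps =>
      simp only [map_mul, map_zero, FreeAlgebra.lift_ι_apply, transitionMatrix_mul]
      rw [← transitionMatrix_none K]
      exact congrArg (transitionMatrix K) (by decide)
    | _ =>
      simp only [map_mul, FreeAlgebra.lift_ι_apply, transitionMatrix_mul]
      exact congrArg (transitionMatrix K) (by decide)⟩

theorem wordRep_eval (w : HWord) : wordRep K (eval K w) = transitionMatrix K (HWord.mul · w) := by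
  have h (g : HGen) : wordRep K (gen K g) = transitionMatrix K (HWord.mulGen · g) := by
    simp [wordRep, gen]
  simp only [eval, HWord.mul, map_list_prod, List.map_map, Function.comp_def, h,
    transitionMatrix_foldlM]

theorem linearIndependent_eval : LinearIndependent K (eval K) := by
  let rowSum : HA K →ₗ[K] HWord → K :=
    (LinearMap.proj .e1 + LinearMap.proj .e2 : (HWord → HWord → K) →ₗ[K] _) ∘ₗ
      (Matrix.ofLinearEquiv K).symm.toLinearMap ∘ₗ (wordRep K).toLinearMap
  refine .of_comp rowSum ?_
  have rowSum_eval (w : HWord) : rowSum (eval K w) = Pi.single w 1 := by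
    have hw : HWord.mul .e1 w = some w ∧ HWord.mul .e2 w = none ∨
        HWord.mul .e1 w = none ∧ HWord.mul .e2 w = some w := by
      revert w
      decide
    rcases hw with ⟨h1, h2⟩ | ⟨h1, h2⟩ <;>
      simp [rowSum, wordRep_eval, transitionMatrix, h1, h2]
  have hcomp : rowSum ∘ eval K = Pi.basisFun K HWord := by
    funext w
    simp [rowSum_eval]
  exact hcomp ▸ (Pi.basisFun K HWord).linearIndependent

theorem one_mem_span_eval : 1 ∈ Submodule.span K (Set.range (eval K)) := by
  have h : eval K .e1 + eval K .e2 = 1 := by simpa [eval, HWord.letters] using gen_e1_add_gen_e2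
  rw [← h]
  exact add_mem (Submodule.subset_span ⟨_, rfl⟩) (Submodule.subset_span ⟨_, rfl⟩)

theorem mul_gen_mem_span_eval (g : HGen) {x : HA K}
    (hx : x ∈ Submodule.span K (Set.range (eval K))) :
    x * gen K g ∈ Submodule.span K (Set.range (eval K)) := by
  induction hx using Submodule.span_induction with
  | mem _ hw =>
    obtain ⟨w, rfl⟩ := hw
    rw [eval_mul_gen]
    cases w.mulGen g with
    | none => exact Submodule.zero_mem _
    | some u => exact Submodule.subset_span ⟨u, rfl⟩
  | zero => simp
  | add x y _ _ hx hy => simpa only [add_mul] using add_mem hx hy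
  | smul c x _ hx => simpa only [smul_mul_assoc] using Submodule.smul_mem _ c hx

theorem span_eval : ⊤ ≤ Submodule.span K (Set.range (eval K)) := fun x _ =>
  one_mul x ▸ mul_mem_of_adjoin_eq_top adjoin_range_gen
    (by rintro _ hv _ ⟨g, rfl⟩; exact mul_gen_mem_span_eval g hv) one_mem_span_eval x

variable (K) in
/-- The basis of `A` consisting of the words. -/
noncomputable def basis : Module.Basis HWord K (HA K) := .mk linearIndependent_eval span_eval

theorem isMultiplicativeBasis_basis : IsMultiplicativeBasis (basis K) HWord.mul := fun w v => by
  simpa [basis] using eval_mul_eval w v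

variable (K) in
/-- The action of `A` on its simple right module `SMod K j`, as a character of `A`. -/
def character (j : Fin 2) : HA K →ₐ[K] K := if j = 0 then phi1 K else phi2 K

variable (K) in
/-- The simple right `A`-module `SMod K j` as an object of the category of right `A`-modules. -/
def simple (j : Fin 2) : ModuleCat (HA K)ᵐᵒᵖ := ModuleCat.of (HA K)ᵐᵒᵖ (SMod K j)

variable (K) in
open scoped ModuleCat in
/-- The identification of the underlying `K`-vector space of a simple right `A`-module with `K`. -/
def simpleEquiv (j : Fin 2) : simple K j ≃ₗ[K] K :=
  { AddEquiv.refl K with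
    map_smul' c y := congrArg (· * (show K from y)) ((character K j).commutes c) }

theorem simpleEquiv_op_smul {j : Fin 2} (a : HA K) (y : simple K j) :
    simpleEquiv K j (op a • y) = character K j a * simpleEquiv K j y := rfl

theorem op_smul_simple_eq_zero {j : Fin 2} {a : HA K} (ha : character K j a = 0) (y : simple K j) :
    op a • y = 0 :=
  (simpleEquiv K j).injective <| by rw [simpleEquiv_op_smul, ha, zero_mul, map_zero]

theorem op_smul_simple_eq_self {j : Fin 2} {a : HA K} (ha : character K j a = 1) (y : simple K j) :
    op a • y = y :=
  (simpleEquiv K j).injective <| by rw [simpleEquiv_op_smul, ha, one_mul]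

theorem character_basis (j : Fin 2) (w : HWord) :
    character K j (basis K w) = if w = .idem j then 1 else 0 := by
  fin_cases j <;> cases w <;>
    simp [basis, eval, HWord.letters, HWord.idem, character, gen, phi1, phi2]

theorem basis_beAlBeAl_mul (x : HA K) :
    basis K .beAlBeAl * x = character K 1 x • basis K .beAlBeAl := by
  suffices LinearMap.mulLeft K (basis K .beAlBeAl) =
      (character K 1).toLinearMap.smulRight (basis K .beAlBeAl) from LinearMap.congr_fun this x
  refine (basis K).ext fun w => ?_
  have hw : HWord.mul .beAlBeAl w = if w = .idem 1 then some .beAlBeAl else none := by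
    revert w
    decide
  simp only [LinearMap.mulLeft_apply, isMultiplicativeBasis_basis _ w, hw,
    LinearMap.smulRight_apply, AlgHom.toLinearMap_apply, character_basis]
  split_ifs <;> simp

/-- The `n`-th term of the minimal projective resolution of `S₂` is `e_{i+1}A` for
`i = vertex n`. -/
def vertex : ZMod 4 → Fin 2 := ![1, 0, 0, 1]

/-- The differential from the `(n + 1)`-st to the `n`-th term of the minimal projective resolution
of `S₂` is left multiplication by `diffWord n`. -/
def diffWord : ZMod 4 → HWord := ![.be, .eps, .al, .beAlBeAl]

theorem basis_mul_of_mul_eq_some {w v u : HWord} (h : w.mul v = some u) :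
    basis K w * basis K v = basis K u := by
  rw [isMultiplicativeBasis_basis, h, Option.elim_some]

theorem idem_mul_diffWord : ∀ n : ZMod 4,
    HWord.mul (.idem (vertex n)) (diffWord n) = some (diffWord n) := by
  decide

theorem diffWord_mul_idem : ∀ n : ZMod 4,
    HWord.mul (diffWord n) (.idem (vertex (n + 1))) = some (diffWord n) := by
  decide

theorem diffWord_mul_diffWord : ∀ n : ZMod 4, HWord.mul (diffWord n) (diffWord (n + 1)) = none := by
  decide

theorem character_basis_diffWord (j : Fin 2) (n : ZMod 4) :
    character K j (basis K (diffWord n)) = 0 := by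
  have hne : diffWord n ≠ .idem j := by
    revert n j
    decide
  rw [character_basis, if_neg hne]

theorem exists_basis_diffWord_mul_eq (n : ZMod 4) {x : HA K}
    (he : basis K (.idem (vertex (n + 1))) * x = x) (hb : basis K (diffWord n) * x = 0) :
    ∃ y, basis K (diffWord (n + 1)) * y = x :=
  isMultiplicativeBasis_basis.exists_mul_eq (fun _ _ _ => HWord.mul_left_cancel)
    (by clear he hb; revert n; decide +kernel) he hb

theorem isRightIdealResolution : IsRightIdealResolution
    (fun n : ℕ => basis K (.idem (vertex n))) (fun n : ℕ => basis K (diffWord n))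
    ((simpleEquiv K 1).symm 1) where
  idem n := basis_mul_of_mul_eq_some (HWord.idem_mul_idem _)
  idem_mul n := basis_mul_of_mul_eq_some (idem_mul_diffWord n)
  mul_idem n := by
    rw [Nat.cast_succ]
    exact basis_mul_of_mul_eq_some (diffWord_mul_idem n)
  mul_succ n := by
    rw [Nat.cast_succ, isMultiplicativeBasis_basis, diffWord_mul_diffWord, Option.elim_none]
  exact n x := by
    rw [Nat.cast_succ]
    exact exists_basis_diffWord_mul_eq n
  smul_idem := op_smul_simple_eq_self (character_basis 1 _) _
  smul_eq_zero := op_smul_simple_eq_zero (character_basis_diffWord 1 _) _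
  exact_zero x he hx := by
    have hx : character K 1 x = 0 := by
      simpa [simpleEquiv_op_smul] using congrArg (simpleEquiv K 1) hx
    -- Since `βαβα · x = χ(x) βαβα`, the augmentation has the same kernel as `βαβα ·`.
    refine exists_basis_diffWord_mul_eq 3 he ?_
    exact (basis_beAlBeAl_mul x).trans (by rw [hx, zero_smul])
  exists_smul_eq y := ⟨algebraMap K (HA K) (simpleEquiv K 1 y), (simpleEquiv K 1).injective <| by
    simp [simpleEquiv_op_smul]⟩

open scoped ModuleCat in
theorem finrank_range_lsmul_idem (i j : Fin 2) :
    Module.finrank K (LinearMap.range (Algebra.lsmul K K (simple K j) (op (basis K (.idem i))))) =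
      if i = j then 1 else 0 := by
  have hij : HWord.idem i = HWord.idem j ↔ i = j := by
    revert i j
    decide
  have h := character_basis (K := K) j (.idem i)
  simp only [hij] at h
  split_ifs at h ⊢
  · have hid : Algebra.lsmul K K (simple K j) (op (basis K (.idem i))) = LinearMap.id :=
      LinearMap.ext (op_smul_simple_eq_self h)
    rw [hid, LinearMap.range_id, finrank_top, (simpleEquiv K j).finrank_eq, Module.finrank_self]
  · have hzero : Algebra.lsmul K K (simple K j) (op (basis K (.idem i))) = 0 :=
      LinearMap.ext (op_smul_simple_eq_zero h)
    rw [hzero, LinearMap.range_zero, finrank_bot]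

theorem extDim_one_left (j : Fin 2) (n : ℕ) : extDim K 1 j n = if vertex n = j then 1 else 0 :=
  (isRightIdealResolution.finrank_ext K (simple K j)
    (fun n => op_smul_simple_eq_zero (character_basis_diffWord j n)) n).trans
    (finrank_range_lsmul_idem _ j)

end HA

/-- For every `n ≥ 0`, `dim_K Ext^n_A(S₂, S₂)` is `1` if `n ≡ 0, 3 (mod 4)` and `0` if
`n ≡ 1, 2 (mod 4)`. -/
theorem ext_s2_s2_dim (n : ℕ) :
    ((n % 4 = 0 ∨ n % 4 = 3) → extDim K 1 1 n = 1) ∧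
    ((n % 4 = 1 ∨ n % 4 = 2) → extDim K 1 1 n = 0) := by
  have vertex_eq : HA.vertex n = HA.vertex (n % 4 : ℕ) := by rw [ZMod.natCast_mod]
  rw [HA.extDim_one_left, vertex_eq]
  constructor <;> rintro (h | h) <;> rw [h] <;> rfl
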